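/- Let m, n be positive integers, A ∈ M_{n,m}(𝔽_q((z⁻¹))) non-degenerate, and let (y_k)_{k≥1} be the sequence of best approximations related to Aᵀ. If ‖y_k‖^{1/k} tends to infinity as k → ∞, then for every ε with 0 < ε < q^{−4−m/n}, the set Bad^ε(A) has Hausdorff dimension n. -/

import Mathlib

/-!
Common setup: the field `𝔽_q((z⁻¹))` of formal power series over a finite field `K` of
cardinality `q`, modeled as the field `FF K` of formal Laurent series in `t = z⁻¹`,
together with its non-Archimedean norm, the embedding of the polynomial ring `𝔽_q[z]`,
distances to polynomial (vectors), Diophantine exponents, `Bad` sets, continued fractions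
and best approximation sequences.
-/

open scoped Classical ENNReal NNReal
open Filter

noncomputable section

namespace FPSDA

variable (K : Type*) [Field K] [Fintype K]

/-- The field `𝔽_q((z⁻¹))` of formal power series in `z⁻¹` over the finite field `K = 𝔽_q`,
modeled as the field of formal Laurent series in the variable `t = z⁻¹`. -/
def FF : Type _ := LaurentSeries K

instance : Field (FF K) := inferInstanceAs (Field (LaurentSeries K))

variable {K}

/-- The identity map, viewing an element of `𝔽_q((z⁻¹))` as a Laurent series in `t = z⁻¹`. -/
def toL (x : FF K) : LaurentSeries K := x

@[simp] lemma toL_zero : toL (0 : FF K) = 0 := rfl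
@[simp] lemma toL_add (x y : FF K) : toL (x + y) = toL x + toL y := rfl
@[simp] lemma toL_neg (x : FF K) : toL (-x) = -toL x := rfl
@[simp] lemma toL_sub (x y : FF K) : toL (x - y) = toL x - toL y := rfl
lemma toL_eq_zero {x : FF K} : toL x = 0 ↔ x = 0 := Iff.rfl

/-- The norm `‖x‖ = q ^ (deg x)` on `𝔽_q((z⁻¹))`, where
`deg x = - (order of x as a Laurent series in z⁻¹)`; `‖0‖ = 0`. -/
def fnorm (x : FF K) : ℝ :=
  if toL x = 0 then 0 else (Fintype.card K : ℝ) ^ (-(toL x).order)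

lemma one_le_q : (1 : ℝ) ≤ (Fintype.card K : ℝ) := by
  exact_mod_cast Fintype.card_pos

lemma fnorm_nonneg (x : FF K) : 0 ≤ fnorm x := by
  unfold fnorm
  split_ifs
  · exact le_refl 0
  · exact zpow_nonneg (by positivity) _

lemma fnorm_eq_zero {x : FF K} : fnorm x = 0 ↔ x = 0 := by
  unfold fnorm
  split_ifs with h
  · exact ⟨fun _ => toL_eq_zero.mp h, fun _ => rfl⟩
  · constructor
    · intro hc
      exact absurd hc (zpow_ne_zero _ (by
        have h0 : (0:ℝ) < (Fintype.card K : ℝ) := by positivity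
        exact ne_of_gt h0))
    · intro hc
      exact absurd (toL_eq_zero.mpr hc) h

lemma fnorm_neg (x : FF K) : fnorm (-x) = fnorm x := by
  unfold fnorm
  rw [toL_neg]
  simp [neg_eq_zero, HahnSeries.order_neg]

lemma fnorm_add_le (x y : FF K) : fnorm (x + y) ≤ max (fnorm x) (fnorm y) := by
  by_cases hxy : x + y = 0
  · rw [fnorm_eq_zero.mpr hxy]
    exact le_max_of_le_left (fnorm_nonneg x)
  by_cases hx : x = 0
  · rw [hx, zero_add]
    exact le_max_right _ _
  by_cases hy : y = 0
  · rw [hy, add_zero]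
    exact le_max_left _ _
  have horder : min (toL x).order (toL y).order ≤ (toL (x + y)).order := by
    rw [toL_add]
    exact HahnSeries.min_order_le_order_add (show toL x + toL y ≠ 0 from hxy)
  have h1 : fnorm (x + y) = (Fintype.card K : ℝ) ^ (-(toL (x+y)).order) := by
    unfold fnorm
    rw [if_neg (show toL (x + y) ≠ 0 from hxy)]
  rcases le_total (toL x).order (toL y).order with h | h
  · have h2 : (toL x).order ≤ (toL (x+y)).order := le_trans (by simp [min_eq_left h]) horder
    refine le_max_of_le_left ?_
    rw [h1]
    unfold fnorm
    rw [if_neg (show toL x ≠ 0 from hx)]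
    exact zpow_le_zpow_right₀ one_le_q (by omega)
  · have h2 : (toL y).order ≤ (toL (x+y)).order := le_trans (by simp [min_eq_right h]) horder
    refine le_max_of_le_right ?_
    rw [h1]
    unfold fnorm
    rw [if_neg (show toL y ≠ 0 from hy)]
    exact zpow_le_zpow_right₀ one_le_q (by omega)

/-- The (ultra)metric `dist x y = ‖x - y‖` on `𝔽_q((z⁻¹))`. -/
instance : MetricSpace (FF K) where
  dist x y := fnorm (x - y)
  dist_self x := by
    show fnorm (x - x) = 0
    rw [sub_self]
    exact fnorm_eq_zero.mpr rfl
  dist_comm x y := by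
    show fnorm (x - y) = fnorm (y - x)
    have h : x - y = -(y - x) := by ring
    rw [h, fnorm_neg]
  dist_triangle x y z := by
    show fnorm (x - z) ≤ fnorm (x - y) + fnorm (y - z)
    have h : x - z = (x - y) + (y - z) := by ring
    calc fnorm (x - z) ≤ max (fnorm (x - y)) (fnorm (y - z)) := by
          rw [h]; exact fnorm_add_le _ _
      _ ≤ fnorm (x - y) + fnorm (y - z) :=
        max_le (le_add_of_nonneg_right (fnorm_nonneg _)) (le_add_of_nonneg_left (fnorm_nonneg _))
  eq_of_dist_eq_zero := by
    intro x y h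
    have h' : x - y = 0 := fnorm_eq_zero.mp h
    exact sub_eq_zero.mp h'

instance : MeasurableSpace (FF K) := borel _
instance : BorelSpace (FF K) := ⟨rfl⟩

/-- The canonical embedding of the polynomial ring `𝔽_q[z]` into `𝔽_q((z⁻¹))`:
the variable `z` is sent to `t⁻¹ = single (-1) 1`. -/
def polyF (P : Polynomial K) : FF K :=
  Polynomial.aeval (HahnSeries.single (-1 : ℤ) (1 : K)) P

/-- Supremum norm of a vector with entries in `𝔽_q((z⁻¹))`. -/
def vnorm {ι : Type*} [Fintype ι] (v : ι → FF K) : ℝ := ⨆ i, fnorm (v i)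

/-- `⟨v⟩`, the distance from the vector `v` to the nearest polynomial vector. -/
def vdist {ι : Type*} [Fintype ι] (v : ι → FF K) : ℝ :=
  ⨅ y : ι → Polynomial K, vnorm (fun i => v i - polyF (y i))

/-- `⟨x⟩`, the distance from the scalar `x` to the nearest polynomial. -/
def sdist (x : FF K) : ℝ := ⨅ y : Polynomial K, fnorm (x - polyF y)

/-- The fractional part `{x} = Σ_{i ≥ 1} a_i z^{-i}` of `x = Σ_i a_i z^{-i}`. -/
def fracPart (x : FF K) : FF K :=
  (⟨fun i => if 1 ≤ i then (toL x).coeff i else 0, (toL x).isPWO_support'.mono (by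
      intro i hi
      by_cases h : (1:ℤ) ≤ i
      · simpa [Function.mem_support, h] using hi
      · simp [Function.mem_support, h] at hi)⟩ : LaurentSeries K)

/-- The integer part `[x] = Σ_{i ≤ 0} a_i z^{-i}` of `x = Σ_i a_i z^{-i}`, as a polynomial
in `z`. -/
def intPoly (x : FF K) : Polynomial K :=
  ∑ i ∈ Finset.range ((-(toL x).order).toNat + 1),
    Polynomial.monomial i ((toL x).coeff (-(i : ℤ)))

/-- `x ∈ 𝔽_q((z⁻¹))` is irrational if it is not in `𝔽_q(z)`, i.e. is not a ratio of two
polynomials in `z`. -/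
def FIrrational (x : FF K) : Prop :=
  ∀ P Q : Polynomial K, Q ≠ 0 → x * polyF Q ≠ polyF P

section Exponents

variable {m n : ℕ}

/-- The norm `‖x‖ = max_j ‖x_j‖` of a polynomial vector `x`. -/
def pnorm {ι : Type*} [Fintype ι] (x : ι → Polynomial K) : ℝ :=
  vnorm (fun i => (polyF (x i) : FF K))

/-- The system `⟨A x - θ⟩ ≤ H^{-ω}`, `‖x‖ ≤ H` has a polynomial solution `x`. -/
def Solv (A : Matrix (Fin n) (Fin m) (FF K)) (θ : Fin n → FF K) (ω H : ℝ) : Prop :=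
  ∃ x : Fin m → Polynomial K,
    vdist (A.mulVec (fun j => polyF (x j)) - θ) ≤ H ^ (-ω) ∧ pnorm x ≤ H

/-- The system `⟨A x⟩ ≤ H^{-ω}`, `‖x‖ ≤ H` has a nonzero polynomial solution `x`. -/
def SolvHom (A : Matrix (Fin n) (Fin m) (FF K)) (ω H : ℝ) : Prop :=
  ∃ x : Fin m → Polynomial K, x ≠ 0 ∧
    vdist (A.mulVec (fun j => polyF (x j))) ≤ H ^ (-ω) ∧ pnorm x ≤ H

/-- The inhomogeneous exponent `ω(A, θ)`: the supremum (in `[0,∞]`) of all `ω` such that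
for arbitrarily large `H` the system `⟨A x - θ⟩ ≤ H^{-ω}`, `‖x‖ ≤ H` has a polynomial
solution. -/
def omegaInhom (A : Matrix (Fin n) (Fin m) (FF K)) (θ : Fin n → FF K) : ℝ≥0∞ :=
  ⨆ (ω : ℝ) (_ : ∀ H₀ : ℝ, ∃ H : ℝ, H₀ ≤ H ∧ Solv A θ ω H), ENNReal.ofReal ω

/-- The uniform inhomogeneous exponent `ω̂(A, θ)`: as `ω(A, θ)`, but with a solution for
all sufficiently large `H`. -/
def omegaHatInhom (A : Matrix (Fin n) (Fin m) (FF K)) (θ : Fin n → FF K) : ℝ≥0∞ :=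
  ⨆ (ω : ℝ) (_ : ∃ H₀ : ℝ, ∀ H : ℝ, H₀ ≤ H → Solv A θ ω H), ENNReal.ofReal ω

/-- The homogeneous exponent `ω(A)`. -/
def omegaHom (A : Matrix (Fin n) (Fin m) (FF K)) : ℝ≥0∞ :=
  ⨆ (ω : ℝ) (_ : ∀ H₀ : ℝ, ∃ H : ℝ, H₀ ≤ H ∧ SolvHom A ω H), ENNReal.ofReal ω

/-- The uniform homogeneous exponent `ω̂(A)`. -/
def omegaHatHom (A : Matrix (Fin n) (Fin m) (FF K)) : ℝ≥0∞ :=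
  ⨆ (ω : ℝ) (_ : ∃ H₀ : ℝ, ∀ H : ℝ, H₀ ≤ H → SolvHom A ω H), ENNReal.ofReal ω

/-- `A` is non-degenerate: the `𝔽_q[z]`-module `Aᵀ 𝔽_q[z]ⁿ + 𝔽_q[z]^m ⊆ 𝔽_q((z⁻¹))^m` has
rank `m + n` over `𝔽_q[z]`, i.e. its `m + n` natural generators are linearly independent
over `𝔽_q[z]`; equivalently, no nonzero polynomial vector `u` makes `Aᵀ u` a polynomial
vector. -/
def Nondegenerate (A : Matrix (Fin n) (Fin m) (FF K)) : Prop :=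
  ∀ u : Fin n → Polynomial K,
    (∃ v : Fin m → Polynomial K,
      A.transpose.mulVec (fun i => polyF (u i)) = fun j => polyF (v j)) → u = 0

/-- `liminf_{x ∈ 𝔽_q[z]^m, ‖x‖ → ∞} ‖x‖^{m/n} ⟨A x - θ⟩`, computed in `[0, ∞]`. -/
def badLiminf (A : Matrix (Fin n) (Fin m) (FF K)) (θ : Fin n → FF K) : ℝ≥0∞ :=
  Filter.liminf
    (fun x : Fin m → Polynomial K =>
      ENNReal.ofReal ((pnorm x) ^ ((m : ℝ) / (n : ℝ)) *
        vdist (A.mulVec (fun j => polyF (x j)) - θ)))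
    (Filter.comap (fun x : Fin m → Polynomial K => pnorm x) Filter.atTop)

/-- The set `Bad^ε(A)` of `θ` in the unit polydisc `𝕀ⁿ` with
`liminf_{‖x‖ → ∞} ‖x‖^{m/n} ⟨A x - θ⟩ ≥ ε`. -/
def Bad (A : Matrix (Fin n) (Fin m) (FF K)) (ε : ℝ) : Set (Fin n → FF K) :=
  {θ | (∀ i, fnorm (θ i) < 1) ∧ ENNReal.ofReal ε ≤ badLiminf A θ}

/-- The set `Bad(A) = ⋃_{ε > 0} Bad^ε(A)`. -/
def BadAll (A : Matrix (Fin n) (Fin m) (FF K)) : Set (Fin n → FF K) :=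
  ⋃ (ε : ℝ) (_ : 0 < ε), Bad A ε

/-- `M(y) = ⟨Aᵀ y⟩` for a polynomial vector `y`. -/
def Mfun (A : Matrix (Fin n) (Fin m) (FF K)) (y : Fin n → Polynomial K) : ℝ :=
  vdist (A.transpose.mulVec (fun i => polyF (y i)))

/-- `y 1, y 2, …` is a sequence of best approximations related to `Aᵀ`:
`1 = Y_1 < Y_2 < ⋯`, `M_1 > M_2 > ⋯`, and `M(x) ≥ M_k` for every nonzero polynomial
vector `x` with `‖x‖ < Y_{k+1}` (the value `y 0` is irrelevant). -/
def IsBestApproxSeq (A : Matrix (Fin n) (Fin m) (FF K))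
    (y : ℕ → Fin n → Polynomial K) : Prop :=
  pnorm (y 1) = 1 ∧
  (∀ k, 1 ≤ k → pnorm (y k) < pnorm (y (k + 1))) ∧
  (∀ k, 1 ≤ k → Mfun A (y (k + 1)) < Mfun A (y k)) ∧
  (∀ k, 1 ≤ k → ∀ x : Fin n → Polynomial K, x ≠ 0 → pnorm x < pnorm (y (k + 1)) →
    Mfun A (y k) ≤ Mfun A x)

end Exponents

section Scalar

/-- The system `⟨ξ x - θ⟩ ≤ H^{-ω}`, `‖x‖ ≤ H` has a polynomial solution `x`. -/
def sSolv (ξ θ : FF K) (ω H : ℝ) : Prop :=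
  ∃ x : Polynomial K, sdist (ξ * polyF x - θ) ≤ H ^ (-ω) ∧ fnorm (polyF x) ≤ H

/-- The scalar inhomogeneous exponent `ω((ξ), θ)`. -/
def somegaInhom (ξ θ : FF K) : ℝ≥0∞ :=
  ⨆ (ω : ℝ) (_ : ∀ H₀ : ℝ, ∃ H : ℝ, H₀ ≤ H ∧ sSolv ξ θ ω H), ENNReal.ofReal ω

/-- The scalar uniform inhomogeneous exponent `ω̂((ξ), θ)`. -/
def somegaHatInhom (ξ θ : FF K) : ℝ≥0∞ :=
  ⨆ (ω : ℝ) (_ : ∃ H₀ : ℝ, ∀ H : ℝ, H₀ ≤ H → sSolv ξ θ ω H), ENNReal.ofReal ω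

/-- The scalar homogeneous exponent `ω((ξ))`. -/
def somegaHom (ξ : FF K) : ℝ≥0∞ :=
  ⨆ (ω : ℝ) (_ : ∀ H₀ : ℝ, ∃ H : ℝ, H₀ ≤ H ∧ ∃ x : Polynomial K, x ≠ 0 ∧
      sdist (ξ * polyF x) ≤ H ^ (-ω) ∧ fnorm (polyF x) ≤ H), ENNReal.ofReal ω

/-- `liminf_{x ∈ 𝔽_q[z], ‖x‖ → ∞} ‖x‖ ⟨α x - θ⟩`, computed in `[0, ∞]`. -/
def sBadLiminf (α θ : FF K) : ℝ≥0∞ :=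
  Filter.liminf
    (fun x : Polynomial K => ENNReal.ofReal (fnorm (polyF x) * sdist (α * polyF x - θ)))
    (Filter.comap (fun x : Polynomial K => fnorm (polyF x)) Filter.atTop)

/-- The set `Bad^ε(α)` of `θ ∈ 𝕀` with `liminf_{‖x‖ → ∞} ‖x‖ ⟨α x - θ⟩ ≥ ε`. -/
def sBad (α : FF K) (ε : ℝ) : Set (FF K) :=
  {θ | fnorm θ < 1 ∧ ENNReal.ofReal ε ≤ sBadLiminf α θ}

end Scalar

section CF

/-- The Gauss map `T x = 1/x - [1/x]` on `𝔽_q((z⁻¹))`. -/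
def gaussMap (x : FF K) : FF K := fracPart x⁻¹

/-- `pquot α k` is the `(k+1)`-st partial quotient `A_{k+1} = [1 / T^k α]` of the
continued fraction expansion of `α`. -/
def pquot (α : FF K) (k : ℕ) : Polynomial K := intPoly ((gaussMap^[k] α)⁻¹)

/-- `cfQ α k` is the denominator `Q_k` of the `k`-th convergent of the continued fraction
expansion of `α`: `Q_0 = 1`, `Q_1 = A_1`, `Q_{k+2} = A_{k+2} Q_{k+1} + Q_k`. -/
def cfQ (α : FF K) : ℕ → Polynomial K
  | 0 => 1
  | 1 => pquot α 0
  | (k + 2) => pquot α (k + 1) * cfQ α (k + 1) + cfQ α k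

/-- `α` is singular on average: for every `c > 0` the proportion of `l ∈ {1, …, N}` for
which `‖{Q α}‖ ≤ c 2^{-l}` has a solution `Q ∈ 𝔽_q[z]` with `0 < ‖Q‖ ≤ 2^l` tends to `1`
as `N → ∞`. -/
def SingularOnAverage (α : FF K) : Prop :=
  ∀ c : ℝ, 0 < c →
    Filter.Tendsto
      (fun N : ℕ =>
        (((Finset.Icc 1 N).filter (fun l : ℕ =>
            ∃ Q : Polynomial K, Q ≠ 0 ∧ fnorm (polyF Q) ≤ 2 ^ l ∧
              fnorm (fracPart (polyF Q * α)) ≤ c / 2 ^ l)).card : ℝ) / (N : ℝ))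
      Filter.atTop (nhds 1)

end CF

end FPSDA

open FPSDA MeasureTheory

/-!
Let `yₖ` be the best approximations. If the residue (the coefficient of `z⁻¹`) of `yₖ ⬝ᵥ θ` is
nonzero for every `k`, then `θ` is badly approximable: were `A x - θ` too close to `𝔽_q[z]ⁿ`, the
identity `yₖ ⬝ᵥ A x = x ⬝ᵥ Aᵀ yₖ` would make the residue vanish for the first `yₖ` with
`⟨Aᵀ yₖ⟩ < q⁻¹ ‖x‖⁻¹`, whose norm is controlled by Dirichlet's theorem.

Prescribing these residues is a triangular linear system in the digits of `θ`: the `k`-th equation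
can be solved for the digits at `z⁻¹⁻ᵈ`, `d = deg yₖ`, in terms of earlier ones. All digits at other
places are free, and since `k = o(deg yₖ)` they have density one. Reading the free digits as real
base-`q` expansions thus maps the solution set onto the unit cube and is Hölder of every exponent
`< 1`, which forces full dimension.
-/

namespace FPSDA

section General

lemma exists_seq_of_forall_fin_exists {α : Type*} {P : (N : ℕ) → (Fin N → α) → α → Prop}
    (h : ∀ N p, ∃ v, P N p v) : ∃ D : ℕ → α, ∀ N, P N (fun a => D a) (D N) := by
  choose v hv using h
  let step (N : ℕ) (D : (a : ℕ) → a < N → α) : α := v N fun a => D a a.2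
  refine ⟨fun N => Nat.strongRec step N, fun N => ?_⟩
  have hN : Nat.strongRec step N = v N fun a => Nat.strongRec step a := Nat.strongRec_eq step N
  exact (congrArg (P N _) hN).mpr (hv N _)

lemma exists_triangular_solution {F ι κ : Type*} [Field F] [Fintype ι] {d : κ → ℕ}
    (hd : Function.Injective d) {c : κ → ι → ℕ → F} (hc : ∀ k, ∃ i, c k i (d k) ≠ 0)
    (b : κ → F) (g : ℕ → ι → F) :
    ∃ D : ℕ → ι → F, (∀ N ∉ Set.range d, D N = g N) ∧
      ∀ k, ∑ i, ∑ a : Fin (d k + 1), c k i a * D a i = b k := by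
  have hstep (N : ℕ) (p : Fin N → ι → F) : ∃ v : ι → F, (N ∉ Set.range d → v = g N) ∧
      ∀ k, d k = N → ∑ i, ∑ a : Fin N, c k i a * p a i + ∑ i, c k i N * v i = b k := by
    by_cases hN : N ∈ Set.range d
    · obtain ⟨k, rfl⟩ := hN
      obtain ⟨i, hi⟩ := hc k
      refine ⟨Pi.single i ((b k - ∑ i, ∑ a : Fin (d k), c k i a * p a i) / c k i (d k)),
        fun h => (h ⟨k, rfl⟩).elim, fun k' hk' => ?_⟩
      obtain rfl := hd hk'
      change _ + (fun i => c k' i (d k')) ⬝ᵥ Pi.single i _ = _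
      rw [dotProduct_single, mul_div_cancel₀ _ hi, add_sub_cancel]
    · exact ⟨g N, fun _ => rfl, fun k hk => (hN ⟨k, hk⟩).elim⟩
  obtain ⟨D, hD⟩ := exists_seq_of_forall_fin_exists hstep
  refine ⟨D, fun N => (hD N).1, fun k => ?_⟩
  simpa only [Fin.sum_univ_castSucc, Fin.val_castSucc, Fin.val_last,
    Finset.sum_add_distrib] using (hD (d k)).2 k rfl

lemma exists_mul_le_count_notMem_range {d : ℕ → ℕ}
    (hd : (fun k : ℕ => (k : ℝ)) =o[atTop] fun k => (d k : ℝ)) {s : ℝ} (hs : s < 1) :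
    ∃ B : ℝ, ∀ N : ℕ, s * N ≤ Nat.count (· ∉ Set.range d) N + B := by
  obtain ⟨k₀, hk₀⟩ := eventually_atTop.mp (hd.bound (sub_pos.mpr hs))
  refine ⟨k₀ + 1, fun N => ?_⟩
  have hsplit : Nat.count (· ∉ Set.range d) N + Nat.count (· ∈ Set.range d) N = N := by
    rw [add_comm, Nat.count_eq_card_filter_range, Nat.count_eq_card_filter_range,
      Finset.card_filter_add_card_filter_not, Finset.card_range]
  have hsub : {a ∈ Finset.range N | a ∈ Set.range d} ⊆
      (Finset.range (k₀ + ⌊(1 - s) * N⌋₊ + 1)).image d := by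
    intro a ha
    obtain ⟨haN, k, rfl⟩ := Finset.mem_filter.mp ha
    refine Finset.mem_image_of_mem d (Finset.mem_range.mpr (Nat.lt_succ_of_le ?_))
    rcases lt_or_ge k k₀ with hk | hk
    · lia
    · refine (Nat.le_floor ?_).trans (Nat.le_add_left _ _)
      calc (k : ℝ) ≤ (1 - s) * d k := by simpa using hk₀ k hk
        _ ≤ (1 - s) * N := by
          gcongr
          exact (Finset.mem_range.mp haN).le
  have hcount : (Nat.count (· ∈ Set.range d) N : ℝ) ≤ k₀ + (1 - s) * N + 1 := by
    have hcard := (Finset.card_le_card hsub).trans Finset.card_image_le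
    rw [← Nat.count_eq_card_filter_range, Finset.card_range] at hcard
    calc (Nat.count (· ∈ Set.range d) N : ℝ) ≤ k₀ + ⌊(1 - s) * N⌋₊ + 1 := by exact_mod_cast hcard
      _ ≤ k₀ + (1 - s) * N + 1 := by
        gcongr
        exact Nat.floor_le (mul_nonneg (sub_pos.mpr hs).le N.cast_nonneg)
  have hsplit' : (Nat.count (· ∉ Set.range d) N : ℝ) + Nat.count (· ∈ Set.range d) N = N := by
    exact_mod_cast hsplit
  linarith

lemma infinite_compl_range_of_isLittleO {d : ℕ → ℕ}
    (hd : (fun k : ℕ => (k : ℝ)) =o[atTop] fun k => (d k : ℝ)) : (Set.range d)ᶜ.Infinite := by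
  intro hfin
  obtain ⟨B, hB⟩ := exists_mul_le_count_notMem_range hd one_half_lt_one
  obtain ⟨N, hN⟩ := exists_nat_gt (2 * (hfin.toFinset.card + B))
  have hcount : (Nat.count (· ∉ Set.range d) N : ℝ) ≤ hfin.toFinset.card := by
    exact_mod_cast Nat.count_le_card hfin N
  linarith [hB N]

theorem dimH_le_of_card_mul_rpow_le {X : Type*} [EMetricSpace X] {s : Set X} {d : ℝ≥0}
    {ι : ℕ → Type*} [∀ N, Fintype (ι N)] {r : ℕ → ℝ≥0∞} (hr : Tendsto r atTop (nhds 0))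
    {t : ∀ N, ι N → Set X} (ht : ∀ N i, Metric.ediam (t N i) ≤ r N) (hst : ∀ N, s ⊆ ⋃ i, t N i)
    {C : ℝ≥0∞} (hC : C ≠ ∞) (hcard : ∀ N, Fintype.card (ι N) * r N ^ (d : ℝ) ≤ C) :
    dimH s ≤ d := by
  borelize X
  have hsum (N : ℕ) : ∑ i, Metric.ediam (t N i) ^ (d : ℝ) ≤ C :=
    calc ∑ i, Metric.ediam (t N i) ^ (d : ℝ) ≤ ∑ _i : ι N, r N ^ (d : ℝ) :=
          Finset.sum_le_sum fun i _ => ENNReal.rpow_le_rpow (ht N i) d.2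
      _ = Fintype.card (ι N) * r N ^ (d : ℝ) := by
          rw [Finset.sum_const, Finset.card_univ, nsmul_eq_mul]
      _ ≤ C := hcard N
  have hmeasure : μH[d] s ≤ C :=
    calc μH[d] s ≤ liminf (fun N => ∑ i, Metric.ediam (t N i) ^ (d : ℝ)) atTop :=
          Measure.hausdorffMeasure_le_liminf_sum d s r hr t (.of_forall ht) (.of_forall hst)
      _ ≤ liminf (fun _ => C) atTop := liminf_le_liminf (.of_forall hsum)
      _ = C := liminf_const C
  exact dimH_le_of_hausdorffMeasure_ne_top (ne_top_of_le_ne_top hC hmeasure)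

theorem finrank_le_dimH_of_holderOnWith {X E : Type*} [EMetricSpace X] [NormedAddCommGroup E]
    [NormedSpace ℝ E] [FiniteDimensional ℝ E] {f : X → E} {S : Set X}
    (hf : ∀ s : ℝ≥0, s < 1 → ∃ C, HolderOnWith C s f S) (hS : (interior (f '' S)).Nonempty) :
    (Module.finrank ℝ E : ℝ≥0∞) ≤ dimH S := by
  refine ENNReal.le_of_forall_lt_one_mul_le fun a ha => ?_
  lift a to ℝ≥0 using ha.ne_top
  obtain ⟨C, hC⟩ := hf a (by exact_mod_cast ha)
  rcases eq_zero_or_pos a with rfl | hpos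
  · rw [ENNReal.coe_zero, zero_mul]
    exact zero_le
  · rw [← Real.dimH_of_nonempty_interior hS, mul_comm]
    exact ENNReal.mul_le_of_le_div (hC.dimH_image_le hpos)

lemma holderOnWith_piMap {ι : Type*} [Fintype ι] {X Y : ι → Type*}
    [∀ i, PseudoEMetricSpace (X i)] [∀ i, PseudoEMetricSpace (Y i)] {f : ∀ i, X i → Y i}
    {S : ∀ i, Set (X i)} {C s : ℝ≥0} (hf : ∀ i, HolderOnWith C s (f i) (S i)) :
    HolderOnWith C s (Pi.map f) (Set.univ.pi S) := by
  intro x hx y hy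
  refine edist_pi_le_iff.mpr fun i => ((hf i).edist_le (hx i trivial) (hy i trivial)).trans ?_
  gcongr
  exact edist_le_pi_edist x y i

lemma exists_holderOnWith_of_dist_lt_zpow {X Y : Type*} [MetricSpace X] [PseudoMetricSpace Y]
    {f : X → Y} {S : Set X} {c : ℝ} (hc : 1 < c) {s : ℝ≥0} {B : ℝ}
    (hS : ∀ x ∈ S, ∀ y ∈ S, dist x y < 1)
    (hf : ∀ N : ℕ, ∀ x ∈ S, ∀ y ∈ S, dist x y < c ^ (-N : ℤ) → dist (f x) (f y) ≤ c ^ (B - s * N)) :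
    ∃ C, HolderOnWith C s f S := by
  have hc0 : 0 < c := one_pos.trans hc
  refine ⟨(c ^ (B + s)).toNNReal, fun x hx y hy => ?_⟩
  rcases eq_or_ne x y with rfl | hne
  · simp only [edist_self, zero_le]
  obtain ⟨e, he, he'⟩ := exists_mem_Ico_zpow (dist_pos.mpr hne) hc
  obtain ⟨N, rfl⟩ : ∃ N : ℕ, e = -N - 1 := by
    have : e < 0 := (zpow_lt_one_iff_right₀ hc).mp (he.trans_lt (hS x hx y hy))
    exact ⟨(-e - 1).toNat, by lia⟩
  have hdist : dist (f x) (f y) ≤ c ^ (B + s) * dist x y ^ (s : ℝ) :=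
    calc dist (f x) (f y) ≤ c ^ (B - s * N) := hf N x hx y hy (by simpa using he')
      _ = c ^ (B + s) * (c ^ (-N - 1 : ℤ)) ^ (s : ℝ) := by
        rw [← Real.rpow_intCast, ← Real.rpow_mul hc0.le, ← Real.rpow_add hc0]
        push_cast
        ring_nf
      _ ≤ c ^ (B + s) * dist x y ^ (s : ℝ) := by gcongr
  calc edist (f x) (f y) = ENNReal.ofReal (dist (f x) (f y)) := edist_dist _ _
    _ ≤ ENNReal.ofReal (c ^ (B + s) * dist x y ^ (s : ℝ)) := ENNReal.ofReal_le_ofReal hdist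
    _ = (c ^ (B + s)).toNNReal * edist x y ^ (s : ℝ) := by
      rw [ENNReal.ofReal_mul (Real.rpow_nonneg hc0.le _), edist_dist,
        ENNReal.ofReal_rpow_of_nonneg dist_nonneg s.coe_nonneg]
      rfl

end General

section Coefficients

variable {K : Type*} [Field K]

/-- The coefficient of `z⁻ⁱ` in a formal power series `x ∈ 𝔽_q((z⁻¹))`, as an additive map. -/
def coeff (i : ℤ) : FF K →+ K where
  toFun x := (toL x).coeff i
  map_zero' := rfl
  map_add' _ _ := rfl

/-- The embedding `polyF` of `𝔽_q[z]` into `𝔽_q((z⁻¹))` as a ring homomorphism. -/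
def polyHom : Polynomial K →+* FF K :=
  (Polynomial.aeval (HahnSeries.single (-1 : ℤ) (1 : K) : LaurentSeries K)).toRingHom

lemma polyF_eq_polyHom (P : Polynomial K) : polyF P = polyHom P := rfl

lemma polyF_monomial (a : ℕ) (c : K) :
    polyF (Polynomial.monomial a c) = (HahnSeries.single (-a : ℤ) c : LaurentSeries K) := by
  have hc : algebraMap K (LaurentSeries K) c = HahnSeries.single 0 c := by
    simp [RingHom.algebraMap_toAlgebra, HahnSeries.C_apply]
  have haeval : Polynomial.aeval (HahnSeries.single (-1 : ℤ) (1 : K) : LaurentSeries K)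
      (Polynomial.monomial a c) = HahnSeries.single (-a : ℤ) c := by
    rw [Polynomial.aeval_monomial, hc, HahnSeries.single_pow, HahnSeries.single_mul_single]
    simp
  exact haeval

lemma coeff_polyF_monomial_mul (a : ℕ) (c : K) (x : FF K) (i : ℤ) :
    coeff i (polyF (Polynomial.monomial a c) * x) = c * coeff (i + a) x := by
  rw [polyF_monomial]
  have h := HahnSeries.coeff_single_mul_add (r := c) (x := toL x) (a := i + a) (b := -(a : ℤ))
  rwa [add_neg_cancel_right] at h

lemma coeff_polyF_mul {P : Polynomial K} {D : ℕ} (hP : P.degree < D) (x : FF K) (i : ℤ) :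
    coeff i (polyF P * x) = ∑ a : Fin D, P.coeff a * coeff (i + a) x := by
  have hsum : ∑ a : Fin D, Polynomial.monomial a (P.coeff a) = P := by
    rw [Polynomial.sum_fin (fun a c => Polynomial.monomial a c) (by simp) hP,
      Polynomial.sum_monomial_eq]
  conv_lhs => rw [← hsum, polyF_eq_polyHom, map_sum, Finset.sum_mul, map_sum]
  exact Finset.sum_congr rfl fun a _ => coeff_polyF_monomial_mul a _ x i

lemma coeff_one (i : ℤ) : coeff i (1 : FF K) = if i = 0 then 1 else 0 :=
  (HahnSeries.coeff_one (Γ := ℤ) (R := K)).trans (by congr)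

lemma coeff_polyF (P : Polynomial K) (i : ℤ) :
    coeff i (polyF P) = if i ≤ 0 then P.coeff (-i).toNat else 0 := by
  have hP : P.degree < (P.natDegree + 1 + i.natAbs : ℕ) :=
    P.degree_le_natDegree.trans_lt (by exact_mod_cast (by lia))
  rw [← mul_one (polyF P), coeff_polyF_mul hP]
  simp only [coeff_one, mul_ite, mul_one, mul_zero]
  split_ifs with hi
  · rw [Finset.sum_eq_single ⟨(-i).toNat, by lia⟩]
    · exact if_pos (by lia)
    · exact fun a _ ha => if_neg fun h => ha (Fin.ext (by grind))
    · simp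
  · exact Finset.sum_eq_zero fun a _ => if_neg (by lia)

lemma coeff_intPoly (x : FF K) (a : ℕ) : (intPoly x).coeff a = coeff (-a) x := by
  rw [intPoly, Polynomial.finsetSum_coeff]
  simp only [Polynomial.coeff_monomial, Finset.sum_ite_eq', Finset.mem_range]
  split_ifs with ha
  · rfl
  · exact (HahnSeries.coeff_eq_zero_of_lt_order (by lia)).symm

lemma coeff_sub_intPoly (x : FF K) (i : ℤ) :
    coeff i (x - polyF (intPoly x)) = if i ≤ 0 then 0 else coeff i x := by
  rw [map_sub, coeff_polyF]
  split_ifs with hi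
  · rw [coeff_intPoly, Int.toNat_of_nonneg (by lia), neg_neg, sub_self]
  · rw [sub_zero]

variable {ι κ : Type*} [Fintype ι]

/-- The digits of `z⁻¹, …, z⁻ˡ` in `Aᵀ w`, as a linear function of the polynomial vector `w` with
entries of degree `< h`. -/
def transposeDigits (A : Matrix ι κ (FF K)) (h l : ℕ) :
    (ι → Polynomial.degreeLT K h) →ₗ[K] (κ → Fin l → K) where
  toFun w j s := ∑ i, ∑ a : Fin h, (w i : Polynomial K).coeff a * coeff (s + 1 + a) (A i j)
  map_add' w w' := by
    ext j s
    simp only [Pi.add_apply, Submodule.coe_add, Polynomial.coeff_add, add_mul,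
      Finset.sum_add_distrib]
  map_smul' c w := by
    ext j s
    simp only [Pi.smul_apply, Submodule.coe_smul, Polynomial.coeff_smul, smul_eq_mul, mul_assoc,
      Finset.mul_sum, RingHom.id_apply]

lemma transposeDigits_apply (A : Matrix ι κ (FF K)) {h l : ℕ}
    (w : ι → Polynomial.degreeLT K h) (j : κ) (s : Fin l) :
    transposeDigits A h l w j s =
      coeff (s + 1) (A.transpose.mulVec (fun i => polyF (w i : Polynomial K)) j) := by
  simp only [Matrix.mulVec, dotProduct, map_sum]
  refine Finset.sum_congr rfl fun i _ => ?_
  rw [mul_comm, coeff_polyF_mul (Polynomial.mem_degreeLT.mp (w i).2)]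
  rfl

end Coefficients

section Degree

variable {R : Type*} [Semiring R] {ι : Type*} [Fintype ι]

/-- The largest degree of an entry of the polynomial vector `x` (with value `0` at `x = 0`), so
that `‖x‖ = q ^ pdeg x` for `x ≠ 0`. -/
def pdeg (x : ι → Polynomial R) : ℕ :=
  Finset.univ.sup fun i => (x i).natDegree

lemma natDegree_le_pdeg (x : ι → Polynomial R) (i : ι) : (x i).natDegree ≤ pdeg x :=
  Finset.le_sup (f := fun i => (x i).natDegree) (Finset.mem_univ i)

lemma degree_lt_pdeg_add_one (x : ι → Polynomial R) (i : ι) :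
    (x i).degree < (pdeg x + 1 : ℕ) :=
  (x i).degree_le_natDegree.trans_lt
    (by exact_mod_cast Nat.lt_succ_of_le (natDegree_le_pdeg x i))

lemma exists_coeff_pdeg_ne_zero {x : ι → Polynomial R} (hx : x ≠ 0) :
    ∃ i, (x i).coeff (pdeg x) ≠ 0 := by
  obtain ⟨j, hj⟩ := Function.ne_iff.mp hx
  obtain ⟨i, -, hi⟩ := Finset.exists_mem_eq_sup Finset.univ ⟨j, Finset.mem_univ j⟩
    fun i => (x i).natDegree
  by_cases h0 : pdeg x = 0
  · refine ⟨j, ?_⟩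
    rw [h0, ← Nat.le_zero.mp (h0 ▸ natDegree_le_pdeg x j)]
    exact Polynomial.leadingCoeff_ne_zero.mpr hj
  · refine ⟨i, ?_⟩
    rw [pdeg, hi]
    exact Polynomial.leadingCoeff_ne_zero.mpr fun h => h0 (by rw [pdeg, hi, h]; rfl)

end Degree

variable {K : Type*} [Field K] [Fintype K]

local notation "q" => (Fintype.card K : ℝ)

lemma one_lt_q : 1 < q := by
  exact_mod_cast Fintype.one_lt_card

lemma q_pos : 0 < q :=
  zero_lt_one.trans one_lt_q

lemma fnorm_lt_zpow_iff (x : FF K) (N : ℤ) : fnorm x < q ^ (-N) ↔ ∀ i ≤ N, coeff i x = 0 := by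
  by_cases hx : toL x = 0
  · rw [toL_eq_zero] at hx
    subst hx
    simp only [fnorm_eq_zero.mpr, zpow_pos q_pos, map_zero, implies_true]
  · rw [fnorm, if_neg hx, zpow_lt_zpow_iff_right₀ one_lt_q, neg_lt_neg_iff,
      ← Int.add_one_le_iff, HahnSeries.le_order_iff_forall hx]
    simp only [Int.lt_add_one_iff]
    rfl

lemma dist_lt_zpow_iff (x y : FF K) (N : ℤ) :
    dist x y < q ^ (-N) ↔ ∀ i ≤ N, coeff i x = coeff i y := by
  simp only [show dist x y = fnorm (x - y) from rfl, fnorm_lt_zpow_iff, map_sub, sub_eq_zero]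

lemma fnorm_lt_one_iff (x : FF K) : fnorm x < 1 ↔ ∀ i ≤ 0, coeff i x = 0 := by
  simpa using fnorm_lt_zpow_iff x 0

lemma exists_fnorm_lt_one_coeff_eq (D : ℕ → K) :
    ∃ x : FF K, fnorm x < 1 ∧ ∀ a : ℕ, coeff (a + 1) x = D a := by
  let x : FF K := HahnSeries.ofSuppBddBelow (fun i : ℤ => if 1 ≤ i then D (i - 1).toNat else 0)
    ⟨1, fun i hi => not_lt.mp fun h => hi (if_neg (not_le.mpr h))⟩
  have hx (i : ℤ) : coeff i x = if 1 ≤ i then D (i - 1).toNat else 0 := rfl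
  refine ⟨x, (fnorm_lt_one_iff x).mpr fun i hi => ?_, fun a => ?_⟩
  · rw [hx, if_neg (by lia)]
  · rw [hx, if_pos (by lia), add_sub_cancel_right, Int.toNat_natCast]

lemma fnorm_polyF {P : Polynomial K} (hP : P ≠ 0) : fnorm (polyF P) = q ^ P.natDegree := by
  have hlead : coeff (-P.natDegree) (polyF P) ≠ 0 := by
    rw [coeff_polyF, if_pos (by lia), neg_neg, Int.toNat_natCast]
    exact Polynomial.leadingCoeff_ne_zero.mpr hP
  have hne : toL (polyF P) ≠ 0 := fun h => hlead (by rw [toL_eq_zero.mp h, map_zero])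
  have horder : (toL (polyF P)).order = -P.natDegree := by
    refine le_antisymm (HahnSeries.order_le_of_coeff_ne_zero hlead)
      ((HahnSeries.le_order_iff_forall hne).mpr fun i hi => ?_)
    exact (coeff_polyF P i).trans (by
      rw [if_pos (by lia), Polynomial.coeff_eq_zero_of_natDegree_lt (by lia)])
  rw [fnorm, if_neg hne, horder, neg_neg, zpow_natCast]

section Vectors

variable {ι : Type*} [Fintype ι]

lemma mem_ball_zero_one_iff (θ : ι → FF K) :
    θ ∈ Metric.ball 0 1 ↔ ∀ i, fnorm (θ i) < 1 := by
  rw [Metric.mem_ball, dist_pi_lt_iff one_pos]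
  simp only [Pi.zero_apply, show ∀ x : FF K, dist x 0 = fnorm (x - 0) from fun _ => rfl, sub_zero]

lemma fnorm_le_vnorm (v : ι → FF K) (i : ι) : fnorm (v i) ≤ vnorm v :=
  le_ciSup (f := fun i => fnorm (v i)) (Set.finite_range _).bddAbove i

lemma vnorm_nonneg (v : ι → FF K) : 0 ≤ vnorm v :=
  Real.iSup_nonneg fun i => fnorm_nonneg (v i)

lemma vnorm_lt_iff {v : ι → FF K} {c : ℝ} (hc : 0 < c) : vnorm v < c ↔ ∀ i, fnorm (v i) < c := by
  refine ⟨fun h i => (fnorm_le_vnorm v i).trans_lt h, fun h => ?_⟩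
  cases isEmpty_or_nonempty ι
  · rwa [vnorm, Real.iSup_of_isEmpty]
  · obtain ⟨i, hi⟩ := exists_eq_ciSup_of_finite (f := fun i => fnorm (v i))
    exact hi.symm.trans_lt (h i)

lemma vdist_lt_zpow_iff (v : ι → FF K) (N : ℤ) :
    vdist v < q ^ (-N) ↔ ∀ j, ∀ i, 0 < i → i ≤ N → coeff i (v j) = 0 := by
  constructor
  · intro h j i hi hiN
    obtain ⟨y, hy⟩ := exists_lt_of_ciInf_lt h
    have hv := (fnorm_lt_zpow_iff _ N).mp ((fnorm_le_vnorm _ j).trans_lt hy) i hiN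
    rwa [map_sub, coeff_polyF, if_neg (not_le.mpr hi), sub_zero] at hv
  · intro h
    refine (ciInf_le ⟨0, ?_⟩ fun j => intPoly (v j)).trans_lt ?_
    · rintro _ ⟨y, rfl⟩
      exact vnorm_nonneg _
    · rw [vnorm_lt_iff (zpow_pos q_pos _)]
      intro j
      rw [fnorm_lt_zpow_iff]
      intro i hi
      rw [coeff_sub_intPoly]
      split_ifs with h0
      · rfl
      · exact h j i (not_le.mp h0) hi

lemma pnorm_zero : pnorm (0 : ι → Polynomial K) = 0 := by
  simp only [pnorm, vnorm, Pi.zero_apply, polyF_eq_polyHom, map_zero, fnorm_eq_zero.mpr,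
    Real.iSup_const_zero]

lemma pnorm_eq_pow_pdeg {x : ι → Polynomial K} (hx : x ≠ 0) : pnorm x = q ^ pdeg x := by
  obtain ⟨i, hi⟩ := exists_coeff_pdeg_ne_zero hx
  have hxi : x i ≠ 0 := fun h => hi (by rw [h, Polynomial.coeff_zero])
  refine le_antisymm (Real.iSup_le (fun j => ?_) (pow_pos q_pos _).le) ?_
  · change fnorm (polyF (x j)) ≤ _
    by_cases hj : x j = 0
    · rw [hj, polyF_eq_polyHom, map_zero, fnorm_eq_zero.mpr rfl]
      exact (pow_pos q_pos _).le
    · rw [fnorm_polyF hj]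
      exact pow_le_pow_right₀ one_le_q (natDegree_le_pdeg x j)
  · calc q ^ pdeg x ≤ q ^ (x i).natDegree :=
          pow_le_pow_right₀ one_le_q (Polynomial.le_natDegree_of_ne_zero hi)
      _ = fnorm (polyF (x i)) := (fnorm_polyF hxi).symm
      _ ≤ pnorm x := fnorm_le_vnorm (fun i => (polyF (x i) : FF K)) i

end Vectors

/-! ### Transference and Dirichlet's theorem -/

lemma coeff_one_dotProduct_eq_zero {ι : Type*} [Fintype ι] {x : ι → Polynomial K} {v : ι → FF K}
    (h : vdist v < q ^ (-(1 + pdeg x : ℤ))) :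
    coeff 1 ((fun i => polyF (x i)) ⬝ᵥ v) = 0 := by
  rw [vdist_lt_zpow_iff] at h
  rw [dotProduct, map_sum]
  refine Finset.sum_eq_zero fun i _ => ?_
  rw [coeff_polyF_mul (degree_lt_pdeg_add_one x i)]
  exact Finset.sum_eq_zero fun a _ => by rw [h i _ (by lia) (by have := a.2; lia), mul_zero]

variable {m n : ℕ}

lemma coeff_one_dotProduct_eq_zero_of_transference {A : Matrix (Fin n) (Fin m) (FF K)}
    {θ : Fin n → FF K} {x : Fin m → Polynomial K} {y : Fin n → Polynomial K}
    (hy : Mfun A y < q ^ (-(1 + pdeg x : ℤ)))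
    (hx : vdist (A.mulVec (fun j => polyF (x j)) - θ) < q ^ (-(1 + pdeg y : ℤ))) :
    coeff 1 ((fun i => polyF (y i)) ⬝ᵥ θ) = 0 := by
  have hadjoint : (fun i => polyF (y i)) ⬝ᵥ A.mulVec (fun j => polyF (x j)) =
      (fun j => polyF (x j)) ⬝ᵥ A.transpose.mulVec (fun i => polyF (y i)) := by
    rw [Matrix.dotProduct_mulVec, Matrix.mulVec_transpose, dotProduct_comm]
  calc coeff 1 ((fun i => polyF (y i)) ⬝ᵥ θ)
      = coeff 1 ((fun i => polyF (y i)) ⬝ᵥ A.mulVec (fun j => polyF (x j)))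
        - coeff 1 ((fun i => polyF (y i)) ⬝ᵥ (A.mulVec (fun j => polyF (x j)) - θ)) := by
        rw [← map_sub, ← dotProduct_sub, sub_sub_cancel]
    _ = 0 := by
        rw [hadjoint, coeff_one_dotProduct_eq_zero hy, coeff_one_dotProduct_eq_zero hx, sub_zero]

theorem exists_ne_zero_Mfun_lt (A : Matrix (Fin n) (Fin m) (FF K)) {h l : ℕ}
    (hlh : m * l < n * h) :
    ∃ w : Fin n → Polynomial K, w ≠ 0 ∧ pdeg w < h ∧ Mfun A w < q ^ (-(l : ℤ)) := by
  have hrank : Module.finrank K (Fin m → Fin l → K) <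
      Module.finrank K (Fin n → Polynomial.degreeLT K h) := by
    simpa [Module.finrank_pi_fintype, (Polynomial.degreeLTEquiv K h).finrank_eq] using hlh
  obtain ⟨w, hw, hw0⟩ := Submodule.exists_mem_ne_zero_of_ne_bot
    (LinearMap.ker_ne_bot_of_finrank_lt (f := transposeDigits A h l) hrank)
  have hh : 0 < h := Nat.pos_of_ne_zero fun h0 => by simp [h0] at hlh
  refine ⟨fun i => w i, fun h0 => hw0 (funext fun i => Subtype.ext (congrFun h0 i)), ?_, ?_⟩
  · refine (Finset.sup_lt_iff hh).mpr fun i _ => ?_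
    change (w i : Polynomial K).natDegree < h
    by_cases hi : (w i : Polynomial K) = 0
    · rwa [hi, Polynomial.natDegree_zero]
    · exact (Polynomial.natDegree_lt_iff_degree_lt hi).mpr (Polynomial.mem_degreeLT.mp (w i).2)
  · refine (vdist_lt_zpow_iff _ _).mpr fun j s hs hsl => ?_
    have hdigit := congrFun (congrFun (LinearMap.mem_ker.mp hw) j) ⟨(s - 1).toNat, by lia⟩
    rwa [transposeDigits_apply, show ((s - 1).toNat : ℤ) + 1 = s by lia] at hdigit

/-! ### Best approximations -/

namespace IsBestApproxSeq

variable {A : Matrix (Fin n) (Fin m) (FF K)} {y : ℕ → Fin n → Polynomial K}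

lemma ne_zero (hy : IsBestApproxSeq A y) (k : ℕ) : y (k + 1) ≠ 0 := by
  have hpos : 0 < pnorm (y (k + 1)) := by
    cases k with
    | zero => exact one_pos.trans_eq hy.1.symm
    | succ k => exact (vnorm_nonneg _).trans_lt (hy.2.1 (k + 1) (by lia))
  exact fun h => hpos.ne' (by rw [h, pnorm_zero])

lemma dim_pos (hy : IsBestApproxSeq A y) : 0 < n := by
  obtain ⟨i, -⟩ := Function.ne_iff.mp (hy.ne_zero 0)
  exact i.pos

lemma pdeg_one (hy : IsBestApproxSeq A y) : pdeg (y 1) = 0 := by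
  by_contra hdeg
  have hnorm : q ^ pdeg (y 1) = 1 := (pnorm_eq_pow_pdeg (hy.ne_zero 0)).symm.trans hy.1
  exact (one_lt_pow₀ one_lt_q hdeg).ne' hnorm

lemma strictMono_pdeg (hy : IsBestApproxSeq A y) : StrictMono fun k => pdeg (y (k + 1)) := by
  refine strictMono_nat_of_lt_succ fun k => ?_
  have h := hy.2.1 (k + 1) (by lia)
  rwa [pnorm_eq_pow_pdeg (hy.ne_zero _), pnorm_eq_pow_pdeg (hy.ne_zero _),
    pow_lt_pow_iff_right₀ one_lt_q] at h

lemma mul_pdeg_le (hy : IsBestApproxSeq A y) {k N : ℕ}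
    (hN : q ^ (-(N : ℤ)) ≤ Mfun A (y (k + 1))) : n * pdeg (y (k + 2)) ≤ m * N := by
  by_contra! hlt
  obtain ⟨w, hw0, hwdeg, hwM⟩ := exists_ne_zero_Mfun_lt A hlt
  have hnorm : pnorm w < pnorm (y (k + 2)) := by
    rw [pnorm_eq_pow_pdeg hw0, pnorm_eq_pow_pdeg (hy.ne_zero _)]
    exact pow_lt_pow_right₀ one_lt_q hwdeg
  exact (hwM.trans_le hN).not_ge (hy.2.2.2 (k + 1) (by lia) w hw0 hnorm)

lemma exists_Mfun_lt (hy : IsBestApproxSeq A y) (N : ℕ) :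
    ∃ k, Mfun A (y (k + 1)) < q ^ (-(N : ℤ)) ∧ n * pdeg (y (k + 1)) ≤ m * N := by
  have hex : ∃ k, Mfun A (y (k + 1)) < q ^ (-(N : ℤ)) := by
    by_contra! h
    have hdeg : m * N + 1 ≤ pdeg (y (m * N + 2)) := hy.strictMono_pdeg.id_le (m * N + 1)
    have hle : m * N + 1 ≤ m * N :=
      calc m * N + 1 ≤ n * pdeg (y (m * N + 2)) := hdeg.trans (Nat.le_mul_of_pos_left _ hy.dim_pos)
        _ ≤ m * N := hy.mul_pdeg_le (h _)
    lia
  obtain ⟨k, hk, hmin⟩ := Nat.findX hex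
  refine ⟨k, hk, ?_⟩
  cases k with
  | zero => simp [hy.pdeg_one]
  | succ k => exact hy.mul_pdeg_le (not_lt.mp (hmin k k.lt_succ_self))

lemma le_rpow_pnorm_mul_vdist (hy : IsBestApproxSeq A y) {θ : Fin n → FF K}
    (hcoeff : ∀ k, coeff 1 ((fun i => polyF (y (k + 1) i)) ⬝ᵥ θ) ≠ 0)
    {x : Fin m → Polynomial K} (hx : x ≠ 0) :
    q ^ (-(1 : ℝ) - m / n) ≤
      pnorm x ^ ((m : ℝ) / n) * vdist (A.mulVec (fun j => polyF (x j)) - θ) := by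
  obtain ⟨k, hM, hdeg⟩ := hy.exists_Mfun_lt (1 + pdeg x)
  have hdist : q ^ (-(1 + pdeg (y (k + 1)) : ℤ)) ≤
      vdist (A.mulVec (fun j => polyF (x j)) - θ) := by
    by_contra! hlt
    exact hcoeff k (coeff_one_dotProduct_eq_zero_of_transference (by exact_mod_cast hM) hlt)
  have hn : (0 : ℝ) < n := by exact_mod_cast hy.dim_pos
  have hdeg' : (pdeg (y (k + 1)) : ℝ) ≤ m / n * (1 + pdeg x) := by
    rw [div_mul_eq_mul_div, le_div_iff₀' hn]
    exact_mod_cast hdeg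
  calc q ^ (-(1 : ℝ) - m / n)
      ≤ q ^ (pdeg x * ((m : ℝ) / n) + -(1 + pdeg (y (k + 1)))) :=
        Real.rpow_le_rpow_of_exponent_le one_le_q (by linarith)
    _ = pnorm x ^ ((m : ℝ) / n) * q ^ (-(1 + pdeg (y (k + 1)) : ℤ)) := by
        rw [Real.rpow_add q_pos, pnorm_eq_pow_pdeg hx, Real.rpow_mul q_pos.le, Real.rpow_natCast,
          ← Real.rpow_intCast]
        push_cast
        rfl
    _ ≤ _ := mul_le_mul_of_nonneg_left hdist (Real.rpow_nonneg (vnorm_nonneg _) _)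

theorem mem_Bad (hy : IsBestApproxSeq A y) {ε : ℝ} (hε : ε ≤ q ^ (-(1 : ℝ) - m / n))
    {θ : Fin n → FF K} (hθ : θ ∈ Metric.ball 0 1)
    (hcoeff : ∀ k, coeff 1 ((fun i => polyF (y (k + 1) i)) ⬝ᵥ θ) ≠ 0) : θ ∈ Bad A ε := by
  refine ⟨(mem_ball_zero_one_iff θ).mp hθ, Filter.le_liminf_of_le (by isBoundedDefault) ?_⟩
  rw [Filter.eventually_comap]
  filter_upwards [Filter.eventually_gt_atTop 0] with c hc x hx
  have hx0 : x ≠ 0 := by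
    rintro rfl
    exact hc.ne' (hx.symm.trans pnorm_zero)
  exact ENNReal.ofReal_le_ofReal (hε.trans (hy.le_rpow_pnorm_mul_vdist hcoeff hx0))

lemma natCast_isLittleO_pdeg (hy : IsBestApproxSeq A y)
    (hgrow : Tendsto (fun k : ℕ => pnorm (y k) ^ (1 / (k : ℝ))) atTop atTop) :
    (fun k : ℕ => (k : ℝ)) =o[atTop] fun k => (pdeg (y (k + 1)) : ℝ) := by
  rw [Asymptotics.isLittleO_iff_nat_mul_le]
  intro C
  have hlarge := (tendsto_add_atTop_iff_nat 1).mpr hgrow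
  filter_upwards [hlarge.eventually_ge_atTop (q ^ (C : ℝ))] with k hk
  have hk1 : (0 : ℝ) < (k + 1 : ℕ) := by positivity
  rw [pnorm_eq_pow_pdeg (hy.ne_zero k), ← Real.rpow_natCast, ← Real.rpow_mul q_pos.le,
    Real.rpow_le_rpow_left_iff one_lt_q, mul_one_div, le_div_iff₀ hk1] at hk
  rw [Real.norm_natCast, Real.norm_natCast]
  have hle : C * (k + 1) ≤ pdeg (y (k + 1)) := by exact_mod_cast hk
  exact_mod_cast (Nat.mul_le_mul_left C k.le_succ).trans hle

end IsBestApproxSeq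

/-! ### Hausdorff dimension of systems of residue conditions -/

section Dimension

lemma dist_lt_zpow_iff_of_mem_ball {x y : FF K} (hx : x ∈ Metric.ball 0 1)
    (hy : y ∈ Metric.ball 0 1) (N : ℕ) :
    dist x y < q ^ (-N : ℤ) ↔ ∀ a : ℕ, a < N → coeff (a + 1) x = coeff (a + 1) y := by
  rw [Metric.mem_ball, show (1 : ℝ) = q ^ (-0 : ℤ) by simp, dist_lt_zpow_iff] at hx hy
  rw [dist_lt_zpow_iff]
  refine ⟨fun h a ha => h (a + 1) (by lia), fun h i hi => ?_⟩
  rcases le_or_gt i 0 with hi0 | hi0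
  · rw [hx i hi0, hy i hi0]
  · obtain ⟨a, rfl⟩ : ∃ a : ℕ, i = a + 1 := ⟨(i - 1).toNat, by lia⟩
    exact h a (by lia)

lemma dist_lt_one_of_mem_ball {x y : FF K} (hx : x ∈ Metric.ball 0 1)
    (hy : y ∈ Metric.ball 0 1) : dist x y < 1 := by
  simpa using dist_lt_zpow_iff_of_mem_ball hx hy 0

variable {ι κ : Type*} [Fintype ι]

theorem dimH_ball_zero_one_le : dimH (Metric.ball (0 : ι → FF K) 1) ≤ Fintype.card ι := by
  let r (N : ℕ) : ℝ≥0∞ := (Fintype.card K : ℝ≥0∞)⁻¹ ^ N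
  let t (N : ℕ) (c : ι → Fin N → K) : Set (ι → FF K) :=
    {θ ∈ Metric.ball 0 1 | ∀ i, ∀ a : Fin N, coeff (a + 1) (θ i) = c i a}
  have hr : Tendsto r atTop (nhds 0) := ENNReal.tendsto_pow_atTop_nhds_zero_of_lt_one
    (ENNReal.inv_lt_one.mpr (by exact_mod_cast Fintype.one_lt_card))
  have ht (N : ℕ) (c : ι → Fin N → K) : Metric.ediam (t N c) ≤ r N := by
    refine Metric.ediam_le fun θ hθ θ' hθ' => edist_pi_le_iff.mpr fun i => ?_
    have hdist : dist (θ i) (θ' i) < q ^ (-N : ℤ) :=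
      (dist_lt_zpow_iff_of_mem_ball ((dist_le_pi_dist θ 0 i).trans_lt hθ.1)
        ((dist_le_pi_dist θ' 0 i).trans_lt hθ'.1) N).mpr fun a ha =>
          (hθ.2 i ⟨a, ha⟩).trans (hθ'.2 i ⟨a, ha⟩).symm
    calc edist (θ i) (θ' i) ≤ ENNReal.ofReal (q ^ (-N : ℤ)) :=
          (edist_dist _ _).trans_le (ENNReal.ofReal_le_ofReal hdist.le)
      _ = r N := by
        rw [zpow_neg, zpow_natCast, ENNReal.ofReal_inv_of_pos (pow_pos q_pos _),
          ENNReal.ofReal_pow q_pos.le, ENNReal.ofReal_natCast, ENNReal.inv_pow]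
  have hcover (N : ℕ) : Metric.ball 0 1 ⊆ ⋃ c, t N c := fun θ hθ =>
    Set.mem_iUnion.mpr ⟨fun i a => coeff (a + 1) (θ i), hθ, fun _ _ => rfl⟩
  have hcard (N : ℕ) :
      Fintype.card (ι → Fin N → K) * r N ^ ((Fintype.card ι : ℝ≥0) : ℝ) ≤ 1 := by
    rw [NNReal.coe_natCast, ENNReal.rpow_natCast, Fintype.card_fun, Fintype.card_fun,
      Fintype.card_fin, Nat.cast_pow, Nat.cast_pow, ← mul_pow, ← mul_pow, ENNReal.mul_inv_cancel
        (by exact_mod_cast Fintype.card_ne_zero) (ENNReal.natCast_ne_top _), one_pow, one_pow]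
  exact_mod_cast dimH_le_of_card_mul_rpow_le hr ht hcover ENNReal.one_ne_top hcard

/-- The real number with base-`q` expansion given by the digits of `x` at `z⁻ᵃ⁻¹`, for the natural
numbers `a` satisfying `p` in increasing order. -/
def readDigits (p : ℕ → Prop) (x : FF K) : ℝ :=
  Real.ofDigits fun j => Fintype.equivFin K (coeff (Nat.nth p j + 1) x)

lemma dist_readDigits_le (p : ℕ → Prop) [DecidablePred p] {x y : FF K} {N : ℕ}
    (h : dist x y < q ^ (-N : ℤ)) :
    dist (readDigits p x) (readDigits p y) ≤ (q ^ Nat.count p N)⁻¹ := by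
  refine Real.abs_ofDigits_sub_ofDigits_le fun j hj => ?_
  have hjN := Nat.nth_lt_of_lt_count hj
  rw [(dist_lt_zpow_iff x y N).mp h _ (by lia)]

lemma exists_holderOnWith_readDigits {p : ℕ → Prop} [DecidablePred p] {s : ℝ≥0} {B : ℝ}
    (hp : ∀ N : ℕ, s * N ≤ Nat.count p N + B) :
    ∃ C, HolderOnWith C s (readDigits (K := K) p) (Metric.ball 0 1) := by
  refine exists_holderOnWith_of_dist_lt_zpow (one_lt_q (K := K)) (B := B)
    (fun x hx y hy => dist_lt_one_of_mem_ball hx hy) fun N x _ y _ hxy => ?_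
  calc dist (readDigits p x) (readDigits p y) ≤ (q ^ Nat.count p N)⁻¹ := dist_readDigits_le p hxy
    _ = q ^ (-(Nat.count p N : ℝ)) := by rw [Real.rpow_neg q_pos.le, Real.rpow_natCast]
    _ ≤ q ^ (B - s * N) := Real.rpow_le_rpow_of_exponent_le one_le_q (by linarith [hp N])

/-- The `θ` in the open unit ball for which the residue of `y k ⬝ᵥ θ`, i.e. its coefficient of
`z⁻¹`, equals `b k` for every `k`. -/
def prescribedResidues (y : κ → ι → Polynomial K) (b : κ → K) : Set (ι → FF K) :=
  {θ ∈ Metric.ball 0 1 | ∀ k, coeff 1 ((fun i => polyF (y k i)) ⬝ᵥ θ) = b k}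

lemma Icc_subset_image_prescribedResidues {y : κ → ι → Polynomial K} (hy : ∀ k, y k ≠ 0)
    (hinj : Function.Injective fun k => pdeg (y k))
    (hinf : (Set.range fun k => pdeg (y k))ᶜ.Infinite) (b : κ → K) :
    Set.Icc 0 1 ⊆ (Pi.map fun _ => readDigits (· ∉ Set.range fun k => pdeg (y k))) ''
      prescribedResidues y b := by
  intro t ht
  set p : ℕ → Prop := (· ∉ Set.range fun k => pdeg (y k))
  choose e _ he using fun i => Real.ofDigits_SurjOn (b := Fintype.card K) Fintype.one_lt_card
    (show t i ∈ Set.Icc 0 1 from ⟨ht.1 i, ht.2 i⟩)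
  obtain ⟨D, hfree, hD⟩ := exists_triangular_solution hinj
    (c := fun k i a => (y k i).coeff a) (fun k => exists_coeff_pdeg_ne_zero (hy k)) b
    fun N i => (Fintype.equivFin K).symm (e i (Nat.count p N))
  choose θ hθ1 hθ using fun i => exists_fnorm_lt_one_coeff_eq fun a => D a i
  refine ⟨θ, ⟨(mem_ball_zero_one_iff θ).mpr hθ1, fun k => ?_⟩, funext fun i => ?_⟩
  · rw [dotProduct, map_sum, ← hD k]
    refine Finset.sum_congr rfl fun i _ => ?_
    rw [coeff_polyF_mul (degree_lt_pdeg_add_one (y k) i)]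
    simp only [add_comm (1 : ℤ), hθ]
  · refine (congrArg Real.ofDigits (funext fun j => ?_)).trans (he i)
    rw [hθ, hfree _ (Nat.nth_mem_of_infinite (p := p) hinf j), Equiv.apply_symm_apply,
      Nat.count_nth_of_infinite (p := p) hinf]

theorem dimH_prescribedResidues {y : ℕ → ι → Polynomial K} (hy : ∀ k, y k ≠ 0)
    (hinj : Function.Injective fun k => pdeg (y k))
    (hgrow : (fun k : ℕ => (k : ℝ)) =o[atTop] fun k => (pdeg (y k) : ℝ)) (b : ℕ → K) :
    dimH (prescribedResidues y b) = Fintype.card ι := by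
  refine le_antisymm ((dimH_mono fun θ hθ => hθ.1).trans dimH_ball_zero_one_le) ?_
  rw [← Module.finrank_fintype_fun_eq_card ℝ]
  refine finrank_le_dimH_of_holderOnWith
    (f := Pi.map fun _ => readDigits (· ∉ Set.range fun k => pdeg (y k))) (fun s hs => ?_) ?_
  · obtain ⟨B, hB⟩ := exists_mul_le_count_notMem_range hgrow (s := s) (by exact_mod_cast hs)
    obtain ⟨C, hC⟩ := exists_holderOnWith_readDigits (K := K) hB
    exact ⟨C, (holderOnWith_piMap fun _ => hC).mono fun θ hθ =>
      (ball_pi (0 : ι → FF K) one_pos).subset hθ.1⟩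
  · refine Set.Nonempty.mono (interior_mono (Icc_subset_image_prescribedResidues hy hinj
      (infinite_compl_range_of_isLittleO hgrow) b)) ⟨fun _ => 1 / 2, ?_⟩
    rw [← Set.pi_univ_Icc, interior_pi_set Set.finite_univ]
    exact fun i _ => by norm_num [interior_Icc]

end Dimension

end FPSDA

theorem dimH_Bad_of_rapid_growth_general {K : Type*} [Field K] [Fintype K] {m n : ℕ}
    (A : Matrix (Fin n) (Fin m) (FF K)) (y : ℕ → Fin n → Polynomial K)
    (hy : IsBestApproxSeq A y)
    (hgrow : Tendsto (fun k : ℕ => pnorm (y k) ^ (1 / (k : ℝ))) atTop atTop) {ε : ℝ}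
    (hε : ε ≤ (Fintype.card K : ℝ) ^ (-(1 : ℝ) - (m : ℝ) / n)) : dimH (Bad A ε) = n := by
  have hball : Bad A ε ⊆ Metric.ball 0 1 := fun θ hθ => (mem_ball_zero_one_iff θ).mpr hθ.1
  have hsub : prescribedResidues (fun k => y (k + 1)) 1 ⊆ Bad A ε := fun θ hθ =>
    hy.mem_Bad hε hθ.1 fun k => by rw [hθ.2 k]; exact one_ne_zero
  have hdim : dimH (prescribedResidues (fun k => y (k + 1)) 1) = n := by
    rw [dimH_prescribedResidues hy.ne_zero hy.strictMono_pdeg.injective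
      (hy.natCast_isLittleO_pdeg hgrow), Fintype.card_fin]
  refine le_antisymm ((dimH_mono hball).trans ?_) (hdim.ge.trans (dimH_mono hsub))
  simpa only [Fintype.card_fin] using dimH_ball_zero_one_le (K := K) (ι := Fin n)

/-- If the norms of the best approximation vectors `(y_k)_{k ≥ 1}` related to `Aᵀ` satisfy
`‖y_k‖^{1/k} → ∞`, then `Bad^ε(A)` has Hausdorff dimension `n` for every
`0 < ε < q^{-4 - m/n}`. -/
theorem dimH_Bad_of_rapid_growth {K : Type*} [Field K] [Fintype K] {m n : ℕ}
    (hm : 0 < m) (hn : 0 < n)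
    (A : Matrix (Fin n) (Fin m) (FF K)) (hA : Nondegenerate A)
    (y : ℕ → Fin n → Polynomial K) (hy : IsBestApproxSeq A y)
    (hgrow : Filter.Tendsto (fun k : ℕ => pnorm (y k) ^ (1 / (k : ℝ)))
      Filter.atTop Filter.atTop) :
    ∀ ε : ℝ, 0 < ε → ε < (Fintype.card K : ℝ) ^ (-(4 : ℝ) - (m : ℝ) / (n : ℝ)) →
      dimH (Bad A ε) = n :=
  fun _ _ hε => dimH_Bad_of_rapid_growth_general A y hy hgrow
    (hε.le.trans (Real.rpow_le_rpow_of_exponent_le one_le_q (by linarith)))
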